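/- Let λ ≥ 1 with √λ ∈ ℤ/λ, and let s > 1/4. Define v1, v2, v3 on (λ𝕋) × ℝ by ṽ1(k,τ) = 1_{[−1,1]}(τ − 4π²k³)·1_{{1/λ}}(k), ṽ2(k,τ) = 1_{[−1,1]}(τ − 4π²k³)·1_{{−2/λ}}(k), ṽ3(k,τ) = 1_{[−1,1]}(τ − 4π²k³)·1_{{√λ}}(k). Then ‖v1‖_{Ẋ^{s,1/2}} ~ ‖v2‖_{Ẋ^{s,1/2}} ~ λ^{−s−1/2} and ‖v3‖_{Ẋ^{s,1/2}} ~ λ^{s/2−1/2}, while ‖J[v1,v2,v3]‖_{Ẋ^{s,−1/2}} ≳ λ^{s/2−2}; consequently the estimate ‖J[v1,v2,v3]‖_{Ẋ^{s,−1/2}} ≲ λ^{0+}·∏‖vj‖_{Ẋ^{s,1/2}} fails for large λ whenever s > 1/4. -/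

import Mathlib

open Real MeasureTheory

/-- The homogeneous Bourgain norm `Ẋ^{s,b}` on `λ𝕋 × ℝ`, computed from the space-time
Fourier transform `w(k,τ)`, `k ∈ ℤ/λ`, with the normalized counting measure `(dk)_λ`. -/
noncomputable def XdotNorm (lam s b : ℝ) (w : ℝ → ℝ → ℂ) : ℝ :=
  Real.sqrt ((1 / lam) * ∑' n : ℤ,
    ∫ τ : ℝ, |((n : ℝ) / lam)| ^ (2 * s) *
      (1 + |τ - 4 * π ^ 2 * ((n : ℝ) / lam) ^ 3|) ^ (2 * b) * ‖w ((n : ℝ) / lam) τ‖ ^ 2)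

/-- `ṽ(k,τ) = 1_{[−1,1]}(τ − 4π²k³)·1_{{k0}}(k)`. -/
noncomputable def airyBump (k0 : ℝ) : ℝ → ℝ → ℂ := fun k τ =>
  if k = k0 ∧ |τ - 4 * π ^ 2 * k ^ 3| ≤ 1 then 1 else 0

/-- The space-time Fourier transform of the non-resonant trilinear operator `J[u,v,w]`
on `λ𝕋 × ℝ`: `i(k/3)` times the convolution restricted to non-resonant frequencies
`(k1+k2)(k2+k3)(k3+k1) ≠ 0`, minus the resonant correction. -/
noncomputable def Jtilde (lam : ℝ) (u v w : ℝ → ℝ → ℂ) (k τ : ℝ) : ℂ :=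
  Complex.I * (k / 3) * ((1 / lam) ^ 2 * ∑' p : ℤ × ℤ,
      (if ((p.1 : ℝ) / lam + (p.2 : ℝ) / lam) *
            ((p.2 : ℝ) / lam + (k - (p.1 : ℝ) / lam - (p.2 : ℝ) / lam)) *
            ((k - (p.1 : ℝ) / lam - (p.2 : ℝ) / lam) + (p.1 : ℝ) / lam) ≠ 0 then
        ∫ τ1 : ℝ, ∫ τ2 : ℝ,
          u ((p.1 : ℝ) / lam) τ1 * v ((p.2 : ℝ) / lam) τ2 *
            w (k - (p.1 : ℝ) / lam - (p.2 : ℝ) / lam) (τ - τ1 - τ2)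
      else 0))
    - Complex.I * k * ∫ τ1 : ℝ, ∫ τ2 : ℝ, u k τ1 * v k τ2 * w (-k) (τ - τ1 - τ2)

/-- Real-valued unit box centred at `c`. -/
noncomputable def bx (c x : ℝ) : ℝ := if |x - c| ≤ 1 then 1 else 0

lemma bx_measurable (c : ℝ) : Measurable (bx c) := by
  unfold bx
  refine Measurable.ite ?_ measurable_const measurable_const
  exact measurableSet_le (by fun_prop) measurable_const

lemma bx_nonneg (c x : ℝ) : 0 ≤ bx c x := by
  unfold bx; split_ifs <;> norm_num

lemma bx_le (c x : ℝ) : bx c x ≤ 1 := by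
  unfold bx; split_ifs <;> norm_num

lemma bx_eq_indicator (c : ℝ) :
    bx c = (Set.Icc (c - 1) (c + 1)).indicator (fun _ => (1 : ℝ)) := by
  funext x
  unfold bx
  by_cases h : |x - c| ≤ 1
  · have h2 := abs_le.1 h
    rw [if_pos h, Set.indicator_of_mem]
    constructor <;> linarith
  · rw [if_neg h, Set.indicator_of_notMem]
    intro h2
    apply h
    rw [abs_le]
    constructor <;> linarith [h2.1, h2.2]

lemma bx_integrable (c : ℝ) : Integrable (bx c) := by
  rw [bx_eq_indicator, integrable_indicator_iff measurableSet_Icc]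
  exact integrableOn_const (by simp)

lemma bx_integral (c : ℝ) : ∫ x, bx c x = 2 := by
  rw [bx_eq_indicator, integral_indicator measurableSet_Icc]
  simp
  norm_num

lemma bx_mul_integrable (a M : ℝ) (h : ℝ → ℝ) (hm : Measurable h) (h0 : ∀ x, 0 ≤ h x)
    (hM : ∀ x, h x ≤ M) : Integrable (fun t => bx a t * h t) := by
  refine (((bx_integrable a).mul_const M)).mono' ((bx_measurable a).mul hm).aestronglyMeasurable ?_
  refine Filter.Eventually.of_forall fun t => ?_
  rw [Real.norm_eq_abs, abs_of_nonneg (mul_nonneg (bx_nonneg _ _) (h0 _))]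
  exact mul_le_mul_of_nonneg_left (hM t) (bx_nonneg _ _)

lemma bx_mul_le (a M : ℝ) (h : ℝ → ℝ) (hm : Measurable h) (h0 : ∀ x, 0 ≤ h x)
    (hM : ∀ x, h x ≤ M) : ∫ t, bx a t * h t ≤ 2 * M := by
  have : ∫ t, bx a t * h t ≤ ∫ t, bx a t * M :=
    integral_mono (bx_mul_integrable a M h hm h0 hM) ((bx_integrable a).mul_const M)
      fun t => mul_le_mul_of_nonneg_left (hM t) (bx_nonneg _ _)
  rwa [integral_mul_const, bx_integral] at this

lemma le_integral_of_Icc (a r m : ℝ) (hr : 0 ≤ r) (f : ℝ → ℝ) (hf : Integrable f)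
    (h0 : ∀ x, 0 ≤ f x) (hm : ∀ x, |x - a| ≤ r → m ≤ f x) : 2 * r * m ≤ ∫ t, f t := by
  have h1 : ∫ t, (Set.Icc (a - r) (a + r)).indicator (fun _ => m) t = 2 * r * m := by
    rw [integral_indicator measurableSet_Icc]
    simp
    left
    rw [max_eq_left] <;> linarith
  rw [← h1]
  refine integral_mono ?_ hf ?_
  · rw [integrable_indicator_iff measurableSet_Icc]
    exact integrableOn_const (by simp)
  · intro t
    show (Set.Icc (a - r) (a + r)).indicator (fun _ => m) t ≤ f t
    by_cases ht : t ∈ Set.Icc (a - r) (a + r)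
    · rw [Set.indicator_of_mem ht]
      refine hm t ?_
      rw [abs_le]
      constructor <;> linarith [ht.1, ht.2]
    · rw [Set.indicator_of_notMem ht]
      exact h0 t

lemma le_bx_mul (a M m : ℝ) (h : ℝ → ℝ) (hm : Measurable h) (h0 : ∀ x, 0 ≤ h x)
    (hM : ∀ x, h x ≤ M) (hl : ∀ x, |x - a| ≤ 1 / 4 → m ≤ h x) :
    m / 2 ≤ ∫ t, bx a t * h t := by
  have := le_integral_of_Icc a (1 / 4) m (by norm_num) _ (bx_mul_integrable a M h hm h0 hM)
    (fun x => mul_nonneg (bx_nonneg _ _) (h0 _)) (fun x hx => by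
      have : bx a x = 1 := by
        unfold bx
        rw [if_pos]
        linarith
      rw [this, one_mul]
      exact hl x hx)
  linarith

/-- double convolution -/
noncomputable def dbl (b c y : ℝ) : ℝ := ∫ t, bx b t * bx c (y - t)

noncomputable def tri (a b c y : ℝ) : ℝ := ∫ t, bx a t * dbl b c (y - t)

lemma conv_measurable (b : ℝ) (h : ℝ → ℝ) (hm : Measurable h) :
    Measurable (fun y : ℝ => ∫ t, bx b t * h (y - t)) := by
  have : StronglyMeasurable (fun p : ℝ × ℝ => bx b p.2 * h (p.1 - p.2)) := by
    apply Measurable.stronglyMeasurable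
    exact ((bx_measurable b).comp measurable_snd).mul (hm.comp (measurable_fst.sub measurable_snd))
  exact (StronglyMeasurable.integral_prod_right (ν := (volume : Measure ℝ)) this).measurable

lemma dbl_measurable (b c : ℝ) : Measurable (dbl b c) :=
  conv_measurable b (bx c) (bx_measurable c)

lemma dbl_nonneg (b c y : ℝ) : 0 ≤ dbl b c y :=
  integral_nonneg fun t => mul_nonneg (bx_nonneg _ _) (bx_nonneg _ _)

lemma dbl_le (b c y : ℝ) : dbl b c y ≤ 2 := by
  have := bx_mul_le b 1 (fun t => bx c (y - t)) ((bx_measurable c).comp (by fun_prop))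
    (fun x => bx_nonneg _ _) (fun x => bx_le _ _)
  unfold dbl
  linarith

lemma dbl_zero (b c y : ℝ) (h : 2 < |y - b - c|) : dbl b c y = 0 := by
  unfold dbl
  have : ∀ t, bx b t * bx c (y - t) = 0 := by
    intro t
    unfold bx
    split_ifs with h1 h2
    · exfalso
      have := abs_add_le (t - b) (y - t - c)
      rw [show t - b + (y - t - c) = y - b - c by ring] at this
      linarith
    all_goals simp
  simp [this]

lemma le_dbl (b c y : ℝ) (h : |y - b - c| ≤ 3 / 4) : 1 / 2 ≤ dbl b c y := by
  refine le_bx_mul b 1 1 (fun t => bx c (y - t)) ((bx_measurable c).comp (by fun_prop))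
    (fun x => bx_nonneg _ _) (fun x => bx_le _ _) ?_
  intro x hx
  show 1 ≤ bx c (y - x)
  unfold bx
  rw [if_pos]
  have := abs_sub (y - b - c) (x - b)
  rw [show y - b - c - (x - b) = y - x - c by ring] at this
  linarith

lemma tri_measurable (a b c : ℝ) : Measurable (tri a b c) :=
  conv_measurable a (dbl b c) (dbl_measurable b c)

lemma tri_nonneg (a b c y : ℝ) : 0 ≤ tri a b c y :=
  integral_nonneg fun t => mul_nonneg (bx_nonneg _ _) (dbl_nonneg _ _ _)

lemma tri_le (a b c y : ℝ) : tri a b c y ≤ 4 := by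
  have := bx_mul_le a 2 (fun t => dbl b c (y - t)) ((dbl_measurable b c).comp (by fun_prop))
    (fun x => dbl_nonneg _ _ _) (fun x => dbl_le _ _ _)
  unfold tri
  linarith

lemma tri_zero (a b c y : ℝ) (h : 3 < |y - a - b - c|) : tri a b c y = 0 := by
  unfold tri
  have : ∀ t, bx a t * dbl b c (y - t) = 0 := by
    intro t
    by_cases h1 : |t - a| ≤ 1
    · rw [dbl_zero, mul_zero]
      have := abs_add_le (t - a) (y - t - b - c)
      rw [show t - a + (y - t - b - c) = y - a - b - c by ring] at this
      linarith
    · unfold bx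
      rw [if_neg h1, zero_mul]
  simp [this]

lemma le_tri (a b c y : ℝ) (h : |y - a - b - c| ≤ 1 / 2) : 1 / 4 ≤ tri a b c y := by
  have := le_bx_mul a 2 (1 / 2) (fun t => dbl b c (y - t))
    ((dbl_measurable b c).comp (by fun_prop))
    (fun x => dbl_nonneg _ _ _) (fun x => dbl_le _ _ _) ?_
  · unfold tri
    linarith
  intro x hx
  refine le_dbl _ _ _ ?_
  have := abs_sub (y - a - b - c) (x - a)
  rw [show y - a - b - c - (x - a) = y - x - b - c by ring] at this
  linarith

lemma weighted_lower (a b c d D A : ℝ) (hA : 0 ≤ A) (hd : |a + b + c - d| ≤ D) :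
    A * (2 + D)⁻¹ * (1 / 16) ≤ ∫ τ, A * (1 + |τ - d|)⁻¹ * (tri a b c τ) ^ 2 := by
  have hpos : ∀ τ : ℝ, 0 < 1 + |τ - d| := fun τ => by positivity
  have hD : 0 ≤ D := (abs_nonneg _).trans hd
  have hnn : ∀ τ, 0 ≤ A * (1 + |τ - d|)⁻¹ * (tri a b c τ) ^ 2 := fun τ => by
    have := hpos τ
    positivity
  have hint : Integrable (fun τ => A * (1 + |τ - d|)⁻¹ * (tri a b c τ) ^ 2) := by
    have hi : Integrable ((Set.Icc (a + b + c - 3) (a + b + c + 3)).indicator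
        (fun _ => A * 16)) := by
      rw [integrable_indicator_iff measurableSet_Icc]
      exact integrableOn_const (by simp)
    refine hi.mono' ?_ ?_
    · apply Measurable.aestronglyMeasurable
      have := tri_measurable a b c
      fun_prop
    · refine Filter.Eventually.of_forall fun τ => ?_
      rw [Real.norm_eq_abs, abs_of_nonneg (hnn τ)]
      by_cases ht : τ ∈ Set.Icc (a + b + c - 3) (a + b + c + 3)
      · rw [Set.indicator_of_mem ht]
        have h1 : (1 + |τ - d|)⁻¹ ≤ 1 := inv_le_one_of_one_le₀ (by linarith [abs_nonneg (τ - d)])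
        have h2 : (tri a b c τ) ^ 2 ≤ 16 := by
          nlinarith [tri_nonneg a b c τ, tri_le a b c τ]
        have h3 : A * (1 + |τ - d|)⁻¹ ≤ A := mul_le_of_le_one_right hA h1
        exact mul_le_mul h3 h2 (by positivity) hA
      · rw [Set.indicator_of_notMem ht, tri_zero]
        · simp
        · by_contra hc
          apply ht
          have := abs_le.1 (not_lt.1 hc)
          constructor <;> linarith [this.1, this.2]
  have := le_integral_of_Icc (a + b + c) (1 / 2) (A * (2 + D)⁻¹ * (1 / 16)) (by norm_num) _ hint
    hnn ?_
  · linarith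
  intro τ hτ
  have h1 : (2 + D)⁻¹ ≤ (1 + |τ - d|)⁻¹ := by
    apply inv_anti₀ (hpos τ)
    have := abs_add_le (τ - (a + b + c)) (a + b + c - d)
    rw [show τ - (a + b + c) + (a + b + c - d) = τ - d by ring] at this
    linarith
  have h2 : 1 / 4 ≤ tri a b c τ := le_tri a b c τ (by
    rwa [show τ - a - b - c = τ - (a + b + c) by ring])
  have h3 : (1 : ℝ) / 16 ≤ (tri a b c τ) ^ 2 := by nlinarith
  have := hpos τ
  gcongr

lemma XdotNorm_single (lam s b : ℝ) (w : ℝ → ℝ → ℂ) (m : ℤ)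
    (h : ∀ n : ℤ, n ≠ m → ∀ τ, w ((n : ℝ) / lam) τ = 0) :
    XdotNorm lam s b w = Real.sqrt ((1 / lam) *
      ∫ τ : ℝ, |((m : ℝ) / lam)| ^ (2 * s) *
      (1 + |τ - 4 * π ^ 2 * ((m : ℝ) / lam) ^ 3|) ^ (2 * b) * ‖w ((m : ℝ) / lam) τ‖ ^ 2) := by
  unfold XdotNorm
  rw [tsum_eq_single m]
  intro n hn
  simp [h n hn]

lemma airy_eq (k0 τ : ℝ) : airyBump k0 k0 τ = ((bx (4 * π ^ 2 * k0 ^ 3) τ : ℝ) : ℂ) := by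
  unfold airyBump bx
  by_cases h : |τ - 4 * π ^ 2 * k0 ^ 3| ≤ 1 <;> simp [h]

lemma airy_zero (k0 k τ : ℝ) (h : k ≠ k0) : airyBump k0 k τ = 0 := by
  unfold airyBump
  simp [h]

lemma bx_weight (d : ℝ) : ∫ τ, (1 + |τ - d|) * (bx d τ) ^ 2 = 3 := by
  have h1 : (fun τ => (1 + |τ - d|) * (bx d τ) ^ 2) = fun τ =>
      (fun t => (Set.Icc (-1 : ℝ) 1).indicator (fun t => 1 + |t|) t) (τ - d) := by
    funext τ
    show (1 + |τ - d|) * (bx d τ) ^ 2 = (Set.Icc (-1 : ℝ) 1).indicator (fun t => 1 + |t|) (τ - d)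
    unfold bx
    by_cases h : |τ - d| ≤ 1
    · rw [if_pos h, Set.indicator_of_mem (Set.mem_Icc.2 (abs_le.1 h))]
      ring
    · rw [if_neg h, Set.indicator_of_notMem (fun h2 => h (abs_le.2 (Set.mem_Icc.1 h2)))]
      ring
  rw [h1, integral_sub_right_eq_self
    (fun t => (Set.Icc (-1 : ℝ) 1).indicator (fun t => 1 + |t|) t) d,
    integral_indicator measurableSet_Icc, integral_Icc_eq_integral_Ioc,
    ← intervalIntegral.integral_of_le (by norm_num),
    ← intervalIntegral.integral_add_adjacent_intervals (b := 0)
      ((by fun_prop : Continuous fun t : ℝ => 1 + |t|).intervalIntegrable _ _)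
      ((by fun_prop : Continuous fun t : ℝ => 1 + |t|).intervalIntegrable _ _)]
  have e1 : ∫ t in (-1 : ℝ)..0, (1 + |t|) = ∫ t in (-1 : ℝ)..0, (1 - t) := by
    apply intervalIntegral.integral_congr
    intro t ht
    rw [Set.uIcc_of_le (by norm_num)] at ht
    simp only
    rw [abs_of_nonpos ht.2]
    ring
  have e2 : ∫ t in (0 : ℝ)..1, (1 + |t|) = ∫ t in (0 : ℝ)..1, (1 + t) := by
    apply intervalIntegral.integral_congr
    intro t ht
    rw [Set.uIcc_of_le (by norm_num)] at ht
    simp only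
    rw [abs_of_nonneg ht.1]
  rw [e1, e2, intervalIntegral.integral_sub (by simp) (by simp),
    intervalIntegral.integral_add (by simp) (by simp)]
  simp
  norm_num

lemma airy_norm (lam s : ℝ) (hl : 0 < lam) (m : ℤ) (k0 : ℝ) (hk : k0 = m / lam) :
    XdotNorm lam s (1 / 2) (airyBump k0) = Real.sqrt 3 * |k0| ^ s * lam ^ (-(1 / 2) : ℝ) := by
  have h : ∀ n : ℤ, n ≠ m → ∀ τ, airyBump k0 ((n : ℝ) / lam) τ = 0 := by
    intro n hn τ
    apply airy_zero
    rw [hk]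
    intro h
    apply hn
    have := (div_left_inj' hl.ne').1 h
    exact_mod_cast this
  rw [XdotNorm_single lam s (1 / 2) _ m h, ← hk]
  have e : ∀ τ : ℝ, |k0| ^ (2 * s) * (1 + |τ - 4 * π ^ 2 * k0 ^ 3|) ^ (2 * (1 / 2) : ℝ) *
      ‖airyBump k0 k0 τ‖ ^ 2 = |k0| ^ (2 * s) * ((1 + |τ - 4 * π ^ 2 * k0 ^ 3|) *
        (bx (4 * π ^ 2 * k0 ^ 3) τ) ^ 2) := by
    intro τ
    rw [airy_eq, Complex.norm_real, Real.norm_eq_abs, sq_abs]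
    norm_num
    ring
  simp_rw [e]
  rw [integral_const_mul, bx_weight]
  rw [Real.sqrt_eq_iff_mul_self_eq (by positivity) (by positivity)]
  have h1 : |k0| ^ (2 * s) = |k0| ^ s * |k0| ^ s := by
    rw [mul_comm, Real.rpow_mul (abs_nonneg _)]
    norm_num
    ring
  have h2 : (1 / lam) = lam ^ (-(1 / 2) : ℝ) * lam ^ (-(1 / 2) : ℝ) := by
    rw [← Real.rpow_add hl]
    norm_num
    rw [Real.rpow_neg_one]
  have h3 : Real.sqrt 3 * Real.sqrt 3 = 3 := Real.mul_self_sqrt (by norm_num)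
  rw [h1, h2]
  linear_combination -(|k0| ^ s * |k0| ^ s * lam ^ (-(1 / 2) : ℝ) * lam ^ (-(1 / 2) : ℝ)) * h3

lemma airy_triple (k1 k2 k3 τ : ℝ) :
    ∫ τ1 : ℝ, ∫ τ2 : ℝ, airyBump k1 k1 τ1 * airyBump k2 k2 τ2 * airyBump k3 k3 (τ - τ1 - τ2)
      = ((tri (4 * π ^ 2 * k1 ^ 3) (4 * π ^ 2 * k2 ^ 3) (4 * π ^ 2 * k3 ^ 3) τ : ℝ) : ℂ) := by
  unfold tri dbl
  rw [← integral_complex_ofReal]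
  congr 1
  funext t
  rw [← integral_const_mul, ← integral_complex_ofReal]
  congr 1
  funext u
  rw [airy_eq, airy_eq, airy_eq]
  push_cast
  ring

lemma J_eq (lam : ℝ) (hl : 4 ≤ lam) (k τ : ℝ) :
    Jtilde lam (airyBump (1 / lam)) (airyBump (-2 / lam)) (airyBump (Real.sqrt lam)) k τ =
      if k = Real.sqrt lam - 1 / lam then
        Complex.I * (k / 3) * ((1 / lam) ^ 2 *
          ((tri (4 * π ^ 2 * (1 / lam) ^ 3) (4 * π ^ 2 * (-2 / lam) ^ 3)
            (4 * π ^ 2 * (Real.sqrt lam) ^ 3) τ : ℝ) : ℂ)) else 0 := by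
  have hl0 : 0 < lam := by linarith
  have hs2 : 2 ≤ Real.sqrt lam := by
    rw [show (2 : ℝ) = Real.sqrt 4 by
      rw [show (4 : ℝ) = 2 ^ 2 by norm_num, Real.sqrt_sq (by norm_num)]]
    exact Real.sqrt_le_sqrt hl
  have hi : 1 / lam ≤ 1 / 4 := one_div_le_one_div_of_le (by norm_num) hl
  have hi0 : 0 < 1 / lam := by positivity
  have hneg : (-2 / lam : ℝ) = -2 * (1 / lam) := by ring
  unfold Jtilde
  have hres : ∀ τ1 τ2 : ℝ, airyBump (1 / lam) k τ1 * airyBump (-2 / lam) k τ2 *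
      airyBump (Real.sqrt lam) (-k) (τ - τ1 - τ2) = 0 := by
    intro τ1 τ2
    by_cases h : k = 1 / lam
    · rw [airy_zero (-2 / lam) k τ2]
      · simp
      · rw [h, hneg]
        intro h2
        linarith
    · rw [airy_zero _ k τ1 h]
      simp
  simp_rw [hres]
  simp only [integral_zero, mul_zero, sub_zero]
  rw [tsum_eq_single ((1, -2) : ℤ × ℤ)]
  · push_cast
    have hk3 : k - 1 / lam - -2 / lam = k + 1 / lam := by ring
    rw [hk3]
    split_ifs with h1 h2 h2
    · have : k + 1 / lam = Real.sqrt lam := by linarith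
      rw [this, airy_triple]
    · have : k + 1 / lam ≠ Real.sqrt lam := fun h => h2 (by linarith)
      simp_rw [airy_zero _ _ _ this]
      simp
    · exfalso
      apply h1
      subst h2
      rw [hneg]
      refine mul_ne_zero (mul_ne_zero ?_ ?_) ?_ <;> intro h <;> linarith
    · simp
  · rintro ⟨p, q⟩ hpq
    split_ifs with h1
    · by_cases hp : p = 1
      · have hq : q ≠ -2 := fun h => hpq (by rw [hp, h])
        have : (q : ℝ) / lam ≠ -2 / lam := by
          intro h
          apply hq
          have := (div_left_inj' hl0.ne').1 h
          exact_mod_cast this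
        simp_rw [airy_zero _ _ _ this]
        simp
      · have : (p : ℝ) / lam ≠ 1 / lam := by
          intro h
          apply hp
          have := (div_left_inj' hl0.ne').1 h
          exact_mod_cast this
        simp_rw [airy_zero _ _ _ this]
        simp
    · rfl

lemma phase_bound (lam r : ℝ) (hl : 4 ≤ lam) (hr : r ^ 2 = lam) (hr2 : 2 ≤ r) :
    |4 * π ^ 2 * (1 / lam) ^ 3 + 4 * π ^ 2 * (-2 / lam) ^ 3 + 4 * π ^ 2 * r ^ 3
      - 4 * π ^ 2 * (r - 1 / lam) ^ 3| ≤ 192 := by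
  have hl0 : 0 < lam := by linarith
  set x := 1 / r with hx
  have hx0 : 0 < x := by positivity
  have hx1 : x ≤ 1 / 2 := one_div_le_one_div_of_le (by norm_num) hr2
  have hrx : r * x = 1 := by rw [hx]; field_simp
  have hlx : 1 / lam = x ^ 2 := by rw [hx, ← hr]; field_simp
  have e : 4 * π ^ 2 * (1 / lam) ^ 3 + 4 * π ^ 2 * (-2 / lam) ^ 3 + 4 * π ^ 2 * r ^ 3
      - 4 * π ^ 2 * (r - 1 / lam) ^ 3 = 4 * π ^ 2 * (3 - 3 * x ^ 3 - 6 * x ^ 6) := by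
    rw [show -2 / lam = -2 * (1 / lam) by ring, hlx]
    linear_combination 4 * π ^ 2 * (3 * (r * x + 1) - 3 * x ^ 3) * hrx
  have h3 : x ^ 3 ≤ 1 / 8 := by
    calc x ^ 3 ≤ (1 / 2) ^ 3 := by gcongr
      _ = _ := by norm_num
  have h6 : x ^ 6 ≤ 1 / 64 := by
    calc x ^ 6 ≤ (1 / 2) ^ 6 := by gcongr
      _ = _ := by norm_num
  have hp3 : 0 < x ^ 3 := by positivity
  have hp6 : 0 < x ^ 6 := by positivity
  have hpi : π ^ 2 ≤ 16 := by nlinarith [Real.pi_le_four, Real.pi_pos]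
  have hpi0 : 0 < π ^ 2 := by positivity
  rw [e, abs_of_nonneg (by apply mul_nonneg <;> linarith)]
  nlinarith

lemma J_lower (lam s : ℝ) (hs : 1 / 4 < s) (hl : 4 ≤ lam)
    (hn : ∃ n : ℤ, (n : ℝ) = lam * Real.sqrt lam) :
    Real.sqrt ((1 / 2) ^ (2 * s) * (1 / 111744)) * lam ^ (s / 2 - 2) ≤
      XdotNorm lam s (-(1 / 2))
        (Jtilde lam (airyBump (1 / lam)) (airyBump (-2 / lam)) (airyBump (Real.sqrt lam))) := by
  obtain ⟨n, hn⟩ := hn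
  have hl0 : 0 < lam := by linarith
  have hs2 : 2 ≤ Real.sqrt lam := by
    rw [show (2 : ℝ) = Real.sqrt 4 by
      rw [show (4 : ℝ) = 2 ^ 2 by norm_num, Real.sqrt_sq (by norm_num)]]
    exact Real.sqrt_le_sqrt hl
  have hi : 1 / lam ≤ 1 / 4 := one_div_le_one_div_of_le (by norm_num) hl
  have hi0 : 0 < 1 / lam := by positivity
  have hsq : Real.sqrt lam ^ 2 = lam := Real.sq_sqrt hl0.le
  have hrp : Real.sqrt lam = lam ^ (1 / 2 : ℝ) := Real.sqrt_eq_rpow lam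
  have hK : ((n - 1 : ℤ) : ℝ) / lam = Real.sqrt lam - 1 / lam := by
    push_cast
    rw [hn]
    field_simp
  rw [XdotNorm_single lam s _ _ (n - 1)]
  swap
  · intro q hq τ
    rw [J_eq lam hl, if_neg]
    rw [← hK]
    intro h
    apply hq
    have := (div_left_inj' hl0.ne').1 h
    exact_mod_cast this
  rw [hK]
  set r := Real.sqrt lam with hr
  set K := r - 1 / lam with hKdef
  have hKr : r / 2 ≤ K := by linarith
  have hK0 : 0 < K := by linarith
  have e : ∀ τ : ℝ, |K| ^ (2 * s) * (1 + |τ - 4 * π ^ 2 * K ^ 3|) ^ (2 * (-(1 / 2)) : ℝ) *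
      ‖Jtilde lam (airyBump (1 / lam)) (airyBump (-2 / lam)) (airyBump r) K τ‖ ^ 2 =
      (K ^ (2 * s) * (K / 3 * (1 / lam) ^ 2) ^ 2) * (1 + |τ - 4 * π ^ 2 * K ^ 3|)⁻¹ *
        (tri (4 * π ^ 2 * (1 / lam) ^ 3) (4 * π ^ 2 * (-2 / lam) ^ 3)
            (4 * π ^ 2 * r ^ 3) τ) ^ 2 := by
    intro τ
    rw [J_eq lam hl, if_pos rfl, abs_of_pos hK0, show (2 * (-(1 / 2)) : ℝ) = -1 by norm_num,
      Real.rpow_neg_one]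
    have : ∀ T : ℝ, ‖Complex.I * ((K : ℂ) / 3) * ((1 / (lam : ℂ)) ^ 2 * (T : ℂ))‖ ^ 2
        = (K / 3 * (1 / lam) ^ 2) ^ 2 * T ^ 2 := by
      intro T
      have : Complex.I * ((K : ℂ) / 3) * ((1 / (lam : ℂ)) ^ 2 * (T : ℂ)) =
          Complex.I * ((K / 3 * (1 / lam) ^ 2 * T : ℝ) : ℂ) := by
        push_cast
        ring
      rw [this, norm_mul, Complex.norm_I, one_mul, Complex.norm_real, Real.norm_eq_abs, sq_abs]
      ring
    rw [this]
    ring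
  simp_rw [e]
  have hlow := weighted_lower (4 * π ^ 2 * (1 / lam) ^ 3) (4 * π ^ 2 * (-2 / lam) ^ 3)
    (4 * π ^ 2 * r ^ 3) (4 * π ^ 2 * K ^ 3) 192 (K ^ (2 * s) * (K / 3 * (1 / lam) ^ 2) ^ 2)
    (by positivity) (phase_bound lam r hl hsq hs2)
  have h2 : lam ^ (s / 2 - 2) = Real.sqrt (lam ^ (s - 4)) := by
    rw [Real.sqrt_eq_rpow, ← Real.rpow_mul hl0.le]
    congr 1
    ring
  rw [h2, ← Real.sqrt_mul (by positivity)]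
  apply Real.sqrt_le_sqrt
  have h3 : (1 / 2) ^ (2 * s) * lam ^ s ≤ K ^ (2 * s) := by
    have : lam ^ s = r ^ (2 * s) := by
      rw [hrp, ← Real.rpow_mul hl0.le]
      congr 1
      ring
    rw [this, ← Real.mul_rpow (by norm_num) (by positivity)]
    apply Real.rpow_le_rpow (by positivity) (by linarith) (by linarith)
  have h4 : lam / 4 ≤ K ^ 2 := by
    rw [← hsq]
    nlinarith
  have h5 : lam ^ (s - 4) = lam ^ s * (1 / lam) ^ 4 := by
    rw [Real.rpow_sub hl0]
    norm_num
    rw [div_eq_mul_inv]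
  calc (1 / 2) ^ (2 * s) * (1 / 111744) * lam ^ (s - 4)
      = (1 / lam) * ((((1 / 2) ^ (2 * s) * lam ^ s) * (lam / 4 * ((1 / lam) ^ 4 / 9))) *
        (2 + 192)⁻¹ * (1 / 16)) := by
        rw [h5]
        field_simp
        norm_num
    _ ≤ (1 / lam) * ((K ^ (2 * s) * (K ^ 2 * ((1 / lam) ^ 4 / 9))) *
        (2 + 192)⁻¹ * (1 / 16)) := by gcongr
    _ = (1 / lam) * ((K ^ (2 * s) * (K / 3 * (1 / lam) ^ 2) ^ 2) * (2 + 192)⁻¹ * (1 / 16)) := by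
        ring
    _ ≤ _ := by gcongr

/-- Kishimoto's counterexample: for `s > 1/4`, with `v1, v2, v3` the Airy bumps at
frequencies `1/λ`, `−2/λ`, `√λ` respectively (`λ ≥ 4`, `√λ ∈ ℤ/λ`), one has
`‖v1‖_{Ẋ^{s,1/2}} ~ ‖v2‖_{Ẋ^{s,1/2}} ~ λ^{−s−1/2}`, `‖v3‖_{Ẋ^{s,1/2}} ~ λ^{s/2−1/2}`,
`‖J[v1,v2,v3]‖_{Ẋ^{s,−1/2}} ≳ λ^{s/2−2}`, and consequently the trilinear estimate
`‖J[v1,v2,v3]‖_{Ẋ^{s,−1/2}} ≲ λ^{0+} ∏‖vj‖_{Ẋ^{s,1/2}}` fails for large `λ`. -/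
theorem stmt_13 (s : ℝ) (hs : 1 / 4 < s) :
    ∃ c1 > 0, ∃ c2 > 0, ∃ c3 > 0,
      (∀ lam : ℝ, 4 ≤ lam → (∃ n : ℤ, (n : ℝ) = lam * Real.sqrt lam) →
        (c1 * lam ^ (-s - 1 / 2) ≤ XdotNorm lam s (1 / 2) (airyBump (1 / lam)) ∧
          XdotNorm lam s (1 / 2) (airyBump (1 / lam)) ≤ c2 * lam ^ (-s - 1 / 2)) ∧
        (c1 * lam ^ (-s - 1 / 2) ≤ XdotNorm lam s (1 / 2) (airyBump (-2 / lam)) ∧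
          XdotNorm lam s (1 / 2) (airyBump (-2 / lam)) ≤ c2 * lam ^ (-s - 1 / 2)) ∧
        (c1 * lam ^ (s / 2 - 1 / 2) ≤ XdotNorm lam s (1 / 2) (airyBump (Real.sqrt lam)) ∧
          XdotNorm lam s (1 / 2) (airyBump (Real.sqrt lam)) ≤ c2 * lam ^ (s / 2 - 1 / 2)) ∧
        c3 * lam ^ (s / 2 - 2) ≤
          XdotNorm lam s (-(1 / 2))
            (Jtilde lam (airyBump (1 / lam)) (airyBump (-2 / lam)) (airyBump (Real.sqrt lam)))) ∧
      ∀ C > 0, ∀ ε : ℝ, 0 < ε → ε < 2 * s - 1 / 2 → ∀ Λ : ℝ,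
        ∃ lam : ℝ, Λ ≤ lam ∧ 4 ≤ lam ∧ (∃ n : ℤ, (n : ℝ) = lam * Real.sqrt lam) ∧
          C * lam ^ ε *
              (XdotNorm lam s (1 / 2) (airyBump (1 / lam)) *
                XdotNorm lam s (1 / 2) (airyBump (-2 / lam)) *
                XdotNorm lam s (1 / 2) (airyBump (Real.sqrt lam)))
            < XdotNorm lam s (-(1 / 2))
                (Jtilde lam (airyBump (1 / lam)) (airyBump (-2 / lam))
                  (airyBump (Real.sqrt lam))) := by
  have h2s : (1 : ℝ) ≤ 2 ^ s := Real.one_le_rpow (by norm_num) (by linarith)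
  have h3p : 0 < Real.sqrt 3 := by positivity
  have hv1 : ∀ lam : ℝ, 4 ≤ lam → XdotNorm lam s (1 / 2) (airyBump (1 / lam)) =
      Real.sqrt 3 * lam ^ (-s - 1 / 2) := by
    intro lam hl
    have hl0 : 0 < lam := by linarith
    rw [airy_norm lam s hl0 1 (1 / lam) (by norm_num), abs_of_pos (by positivity), one_div,
      Real.inv_rpow hl0.le, ← Real.rpow_neg hl0.le, mul_assoc, ← Real.rpow_add hl0, sub_eq_add_neg,
      one_div]
  have hv2 : ∀ lam : ℝ, 4 ≤ lam → XdotNorm lam s (1 / 2) (airyBump (-2 / lam)) =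
      Real.sqrt 3 * 2 ^ s * lam ^ (-s - 1 / 2) := by
    intro lam hl
    have hl0 : 0 < lam := by linarith
    rw [airy_norm lam s hl0 (-2) (-2 / lam) (by norm_num), abs_div, abs_of_pos hl0,
      abs_neg, abs_of_pos (by norm_num : (0 : ℝ) < 2), div_eq_mul_inv, 
      Real.mul_rpow (by norm_num) (by positivity),
      Real.inv_rpow hl0.le, ← Real.rpow_neg hl0.le, sub_eq_add_neg, Real.rpow_add hl0]
    ring
  have hv3 : ∀ lam : ℝ, 4 ≤ lam → (∃ n : ℤ, (n : ℝ) = lam * Real.sqrt lam) →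
      XdotNorm lam s (1 / 2) (airyBump (Real.sqrt lam)) =
      Real.sqrt 3 * lam ^ (s / 2 - 1 / 2) := by
    rintro lam hl ⟨n, hn⟩
    have hl0 : 0 < lam := by linarith
    rw [airy_norm lam s hl0 n (Real.sqrt lam) (by rw [hn]; field_simp),
      abs_of_nonneg (Real.sqrt_nonneg _), Real.sqrt_eq_rpow lam, ← Real.rpow_mul hl0.le,
      mul_assoc, ← Real.rpow_add hl0]
    congr 2
    ring
  have hc3 : 0 < Real.sqrt ((1 / 2) ^ (2 * s) * (1 / 111744)) := by positivity
  refine ⟨Real.sqrt 3, h3p, Real.sqrt 3 * 2 ^ s, by positivity,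
    Real.sqrt ((1 / 2) ^ (2 * s) * (1 / 111744)), hc3, ?_, ?_⟩
  · intro lam hl hn
    have hl0 : 0 < lam := by linarith
    have hle : Real.sqrt 3 ≤ Real.sqrt 3 * 2 ^ s := le_mul_of_one_le_right h3p.le h2s
    refine ⟨?_, ?_, ?_, J_lower lam s hs hl hn⟩
    · rw [hv1 lam hl]
      exact ⟨le_rfl, by gcongr⟩
    · rw [hv2 lam hl]
      exact ⟨by gcongr, le_rfl⟩
    · rw [hv3 lam hl hn]
      exact ⟨le_rfl, by gcongr⟩
  · intro C hC ε hε hε2 Λ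
    set c3 := Real.sqrt ((1 / 2) ^ (2 * s) * (1 / 111744)) with hc3def
    have hδ : 0 < 2 * s - 1 / 2 - ε := by linarith
    set B := C * (Real.sqrt 3 * (Real.sqrt 3 * 2 ^ s) * Real.sqrt 3) / c3 with hB
    have ht : Filter.Tendsto (fun m : ℕ => ((m : ℝ) ^ 2)) Filter.atTop Filter.atTop :=
      (Filter.tendsto_pow_atTop (by norm_num)).comp tendsto_natCast_atTop_atTop
    have ht2 := (tendsto_rpow_atTop hδ).comp ht
    obtain ⟨m, hm1, hm2, hm3⟩ := ((ht.eventually_ge_atTop Λ).and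
      ((ht.eventually_ge_atTop 4).and (ht2.eventually_gt_atTop B))).exists
    have hsq : Real.sqrt ((m : ℝ) ^ 2) = m := Real.sqrt_sq (by positivity)
    have hn : ∃ n : ℤ, (n : ℝ) = (m : ℝ) ^ 2 * Real.sqrt ((m : ℝ) ^ 2) :=
      ⟨(m : ℤ) ^ 3, by rw [hsq]; push_cast; ring⟩
    refine ⟨(m : ℝ) ^ 2, hm1, hm2, hn, ?_⟩
    refine lt_of_lt_of_le ?_ (J_lower _ s hs hm2 hn)
    rw [hv1 _ hm2, hv2 _ hm2, hv3 _ hm2 hn, ← hc3def]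
    simp only [Function.comp] at hm3
    generalize (m : ℝ) ^ 2 = lam at *
    have hl0 : 0 < lam := by linarith
    have h1 : C * (Real.sqrt 3 * (Real.sqrt 3 * 2 ^ s) * Real.sqrt 3) <
        lam ^ (2 * s - 1 / 2 - ε) * c3 := (div_lt_iff₀ hc3).1 hm3
    have e1 : lam ^ (s / 2 - 2) = lam ^ (2 * s - 1 / 2 - ε) * (lam ^ ε * lam ^ (-s - 1 / 2) *
        lam ^ (-s - 1 / 2) * lam ^ (s / 2 - 1 / 2)) := by
      simp only [← Real.rpow_add hl0]
      congr 1
      ring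
    rw [e1]
    have hP : 0 < lam ^ ε * lam ^ (-s - 1 / 2) *
        lam ^ (-s - 1 / 2) * lam ^ (s / 2 - 1 / 2) := by positivity
    have := mul_lt_mul_of_pos_right h1 hP
    calc _ = _ := by ring
      _ < _ := this
      _ = _ := by ring
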